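/- Let K be an infinite field, α ∈ ℤ, and η a nonzero element of K. Let (a_i)_{i∈ℕ} be a sequence in K((t)) such that for every N there exists I with: for all i ≥ I, a_i = 0 or ord(a_i) ≥ N; define f(y) = ∑_{i∈ℕ} a_i y^i for y ∈ K[[t]]. If ord(f(y)) = α and ac(f(y)) = η for every y ∈ K[[t]], then ord(a_0) = α and ac(a_0) = η, and for every i ≥ 1 with a_i ≠ 0 one has ord(a_i) ≥ α + 1. -/

import Mathlib

/-- The `t`-adic order of a Laurent series (with the convention `ord 0 = 0`). -/
noncomputable def ord {K : Type*} [Field K] (x : LaurentSeries K) : ℤ := x.order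

/-- The angular component of a Laurent series: the coefficient of `t^(ord x)`
(so `ac 0 = 0`). -/
noncomputable def ac {K : Type*} [Field K] (x : LaurentSeries K) : K := x.coeff x.order

/-!
At a constant `y = c ∈ K`, the coefficient of `tⁿ` in `∑ᵢ aᵢ yⁱ` is `Pₙ(c)`, where `Pₙ` is the
polynomial whose `i`-th coefficient is the `tⁿ`-coefficient of `aᵢ`; it is a polynomial because
`ord aᵢ → ∞`. Prescribing the order `α` and the angular component `η` of the sum on infinitely many
constants forces `Pₙ = 0` for `n < α` and `P_α = η`, which is the assertion about the `aᵢ`.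
-/

open Filter Topology Polynomial

section LaurentTopology

variable {K ι : Type*} [Field K]

theorem hasBasis_nhds_zero_forall_lt_coeff_eq_zero :
    (𝓝 (0 : LaurentSeries K)).HasBasis (fun _ : ℤ => True)
      fun N => {x | ∀ n < N, x.coeff n = 0} := by
  refine (Valued.hasBasis_nhds_zero (LaurentSeries K) _).to_hasBasis (fun γ _ => ?_) fun N _ => ?_
  · set m := WithZero.log (MonoidWithZeroHom.ValueGroup₀.embedding γ.1) with hm
    have hlt : WithZero.exp (-(1 - m)) < MonoidWithZeroHom.ValueGroup₀.embedding γ.1 := by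
      rw [← WithZero.lt_log_iff_exp_lt (by simp), ← hm]
      lia
    exact ⟨1 - m, trivial, fun x hx => (Valued.v.restrict_lt_iff_lt_embedding).2 <|
      ((LaurentSeries.valuation_le_iff_coeff_lt_eq_zero K).2 hx).trans_lt hlt⟩
  · have hv : Valued.v (HahnSeries.single N 1 : LaurentSeries K) = WithZero.exp (-N) :=
      LaurentSeries.valuation_single_zpow K N
    have hne : Valued.v.restrict (HahnSeries.single N 1 : LaurentSeries K) ≠ 0 := by simp
    refine ⟨Units.mk0 _ hne, trivial, fun x hx => ?_⟩
    exact (LaurentSeries.valuation_le_iff_coeff_lt_eq_zero K).1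
      (hv ▸ (Valued.v.restrict_lt_iff.1 hx).le)

theorem tendsto_zero_iff_eventually_coeff_eq_zero {b : ι → LaurentSeries K} {l : Filter ι} :
    Tendsto b l (𝓝 0) ↔ ∀ N : ℤ, ∀ᶠ i in l, ∀ n < N, (b i).coeff n = 0 := by
  simp [hasBasis_nhds_zero_forall_lt_coeff_eq_zero.tendsto_right_iff]

theorem summable_laurentSeries_of_tendsto_cofinite_zero {b : ι → LaurentSeries K}
    (hb : Tendsto b cofinite (𝓝 0)) : Summable b :=
  have : NonarchimedeanRing (LaurentSeries K) := Valued.v.subgroups_basis.nonarchimedean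
  NonarchimedeanAddGroup.summable_of_tendsto_cofinite_zero hb

theorem coeff_tsum_eq_sum {b : ι → LaurentSeries K} (hb : Summable b) {n : ℤ} {s : Finset ι}
    (hs : ∀ i ∉ s, (b i).coeff n = 0) : (∑' i, b i).coeff n = ∑ i ∈ s, (b i).coeff n := by
  -- The map `coeff n` commutes with the sum: it is continuous for the discrete topology on `K`.
  let _ : UniformSpace K := ⊥
  have : DiscreteTopology K := ⟨rfl⟩
  have hsum : HasSum (fun i => (b i).coeff n) ((∑' i, b i).coeff n) :=
    hb.hasSum.map (HahnSeries.coeff.addMonoidHom (R := K) n)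
      (LaurentSeries.uniformContinuous_coeff n).continuous
  exact hsum.unique (hasSum_sum_of_ne_finset_zero hs)

end LaurentTopology

section ConstantArguments

theorem coeff_mul_C_pow {R : Type*} [Semiring R] (x : LaurentSeries R) (c : R) (i : ℕ)
    (n : ℤ) : (x * HahnSeries.C c ^ i).coeff n = x.coeff n * c ^ i := by
  rw [← map_pow, HahnSeries.C_apply, HahnSeries.coeff_mul_single_zero]

variable {K : Type*} [Field K] {a : ℕ → LaurentSeries K}

theorem summable_mul_C_pow (ha : Tendsto a cofinite (𝓝 0)) (c : K) :
    Summable fun i => a i * HahnSeries.C c ^ i := by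
  refine summable_laurentSeries_of_tendsto_cofinite_zero <|
    tendsto_zero_iff_eventually_coeff_eq_zero.2 fun N => ?_
  filter_upwards [tendsto_zero_iff_eventually_coeff_eq_zero.1 ha N] with i hi n hn
  rw [coeff_mul_C_pow, hi n hn, zero_mul]

theorem exists_polynomial_coeff_tsum (ha : Tendsto a cofinite (𝓝 0)) (n : ℤ) :
    ∃ P : K[X], (∀ i, P.coeff i = (a i).coeff n) ∧
      ∀ c, (∑' i, a i * HahnSeries.C c ^ i).coeff n = P.eval c := by
  have hfin : {i | (a i).coeff n ≠ 0}.Finite :=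
    (tendsto_zero_iff_eventually_coeff_eq_zero.1 ha (n + 1)).mono fun i hi => hi n (lt_add_one n)
  have hzero : ∀ i ∉ hfin.toFinset, (a i).coeff n = 0 := by simp
  refine ⟨∑ i ∈ hfin.toFinset, monomial i ((a i).coeff n), fun i => ?_, fun c => ?_⟩
  · rw [finsetSum_coeff]
    simp only [coeff_monomial, Finset.sum_ite_eq']
    exact ite_eq_left_iff.2 fun hi => (hzero i hi).symm
  · rw [coeff_tsum_eq_sum (summable_mul_C_pow ha c) fun i hi => by
      rw [coeff_mul_C_pow, hzero i hi, zero_mul]]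
    simp only [coeff_mul_C_pow, eval_finsetSum, eval_monomial]

theorem coeff_eq_ite_of_coeff_tsum_eq {S : Set K} (hS : S.Infinite)
    (ha : Tendsto a cofinite (𝓝 0)) {n : ℤ} {e : K}
    (he : ∀ c ∈ S, (∑' i, a i * HahnSeries.C c ^ i).coeff n = e) (i : ℕ) :
    (a i).coeff n = if i = 0 then e else 0 := by
  obtain ⟨P, hcoeff, heval⟩ := exists_polynomial_coeff_tsum ha n
  have hP : P = C e := eq_of_infinite_eval_eq _ _ <| hS.mono fun c hc => by
    rw [Set.mem_ofPred_eq, eval_C, ← heval, he c hc]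
  rw [← hcoeff, hP, coeff_C]

end ConstantArguments

section OrderAngularComponent

variable {K : Type*} [Field K]

theorem ord_eq_and_ac_eq_iff {x : LaurentSeries K} {α : ℤ} {η : K} (hη : η ≠ 0) :
    ord x = α ∧ ac x = η ↔ (∀ n < α, x.coeff n = 0) ∧ x.coeff α = η := by
  constructor
  · rintro ⟨rfl, rfl⟩
    exact ⟨fun n => HahnSeries.coeff_eq_zero_of_lt_order, rfl⟩
  · rintro ⟨hlt, rfl⟩
    have hx : x ≠ 0 := by
      rintro rfl
      exact hη HahnSeries.coeff_zero
    have hord : x.order = α := le_antisymm (HahnSeries.order_le_of_coeff_ne_zero hη)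
      ((HahnSeries.le_order_iff_forall hx).2 hlt)
    exact ⟨hord, congrArg x.coeff hord⟩

theorem tendsto_zero_of_le_ord {a : ℕ → LaurentSeries K}
    (ha : ∀ N : ℤ, ∃ I : ℕ, ∀ i ≥ I, a i = 0 ∨ N ≤ ord (a i)) : Tendsto a atTop (𝓝 0) := by
  refine tendsto_zero_iff_eventually_coeff_eq_zero.2 fun N => eventually_atTop.2 ?_
  obtain ⟨I, hI⟩ := ha N
  refine ⟨I, fun i hi n hn => ?_⟩
  rcases hI i hi with hzero | hord
  · rw [hzero, HahnSeries.coeff_zero]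
  · exact HahnSeries.coeff_eq_zero_of_lt_order (hn.trans_le hord)

end OrderAngularComponent

theorem stmt6_general {K : Type*} [Field K] {S : Set K} (hS : S.Infinite)
    (α : ℤ) (η : K) (hη : η ≠ 0) (a : ℕ → LaurentSeries K)
    (hconv : ∀ N : ℤ, ∃ I : ℕ, ∀ i ≥ I, a i = 0 ∨ N ≤ ord (a i))
    (hval : ∀ c ∈ S, ord (∑' i : ℕ, a i * HahnSeries.C c ^ i) = α ∧
      ac (∑' i : ℕ, a i * HahnSeries.C c ^ i) = η) :
    ord (a 0) = α ∧ ac (a 0) = η ∧ ∀ i : ℕ, 1 ≤ i → a i ≠ 0 → α + 1 ≤ ord (a i) := by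
  have ha : Tendsto a cofinite (𝓝 0) := Nat.cofinite_eq_atTop ▸ tendsto_zero_of_le_ord hconv
  have hsum (c : K) (hc : c ∈ S) := (ord_eq_and_ac_eq_iff hη).1 (hval c hc)
  have hbelow (n : ℤ) (hn : n < α) (i : ℕ) : (a i).coeff n = 0 := by
    simpa using coeff_eq_ite_of_coeff_tsum_eq hS ha (fun c hc => (hsum c hc).1 n hn) i
  have hα (i : ℕ) : (a i).coeff α = if i = 0 then η else 0 :=
    coeff_eq_ite_of_coeff_tsum_eq hS ha (fun c hc => (hsum c hc).2) i
  obtain ⟨hord, hac⟩ := (ord_eq_and_ac_eq_iff hη).2 ⟨fun n hn => hbelow n hn 0, hα 0⟩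
  refine ⟨hord, hac, fun i hi hai => (HahnSeries.le_order_iff_forall hai).2 fun n hn => ?_⟩
  rcases (Int.lt_add_one_iff.1 hn).lt_or_eq with hlt | rfl
  · exact hbelow n hlt i
  · rw [hα, if_neg (Nat.one_le_iff_ne_zero.1 hi)]

/-- Let `K` be an infinite field, `α ∈ ℤ`, `η ∈ K` nonzero, and `(a_i)` a sequence in
`K((t))` with `ord (a_i) → ∞`; set `f(y) = ∑_i a_i yⁱ` for `y ∈ K[[t]]`.  If
`ord (f y) = α` and `ac (f y) = η` for every `y ∈ K[[t]]`, then `ord (a_0) = α`,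
`ac (a_0) = η`, and `ord (a_i) ≥ α + 1` for every `i ≥ 1` with `a_i ≠ 0`. -/
theorem stmt6 {K : Type*} [Field K] [Infinite K]
    (α : ℤ) (η : K) (hη : η ≠ 0) (a : ℕ → LaurentSeries K)
    (hconv : ∀ N : ℤ, ∃ I : ℕ, ∀ i ≥ I, a i = 0 ∨ N ≤ ord (a i))
    (f : LaurentSeries K → LaurentSeries K)
    (hf : ∀ y : LaurentSeries K, (y = 0 ∨ 0 ≤ ord y) → f y = ∑' i : ℕ, a i * y ^ i)
    (hval : ∀ y : LaurentSeries K, (y = 0 ∨ 0 ≤ ord y) → ord (f y) = α ∧ ac (f y) = η) :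
    ord (a 0) = α ∧ ac (a 0) = η ∧ ∀ i : ℕ, 1 ≤ i → a i ≠ 0 → α + 1 ≤ ord (a i) := by
  exact stmt6_general Set.infinite_univ α η hη a hconv fun c _ =>
    hf _ (.inr HahnSeries.order_C.ge) ▸ hval _ (.inr HahnSeries.order_C.ge)
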